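/- For every set Γ of propositional formulas and every propositional formula A: Γ ⊢_IPC A if and only if Γ^b ⊢_S4 A^b. -/

import Mathlib

/-! ### Modal formulas -/

inductive MF : Type
  | atom : ℕ → MF
  | bot  : MF
  | and  : MF → MF → MF
  | or   : MF → MF → MF
  | imp  : MF → MF → MF
  | neg  : MF → MF
  | box  : MF → MF
  deriving DecidableEq

namespace MF

/-- The set of atoms occurring in a modal formula. -/
def atoms : MF → Set ℕ
  | atom n => {n}
  | bot => ∅
  | and A B => atoms A ∪ atoms B
  | or A B => atoms A ∪ atoms B
  | imp A B => atoms A ∪ atoms B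
  | neg A => atoms A
  | box A => atoms A

/-- A boolean valuation on modal formulas respecting the classical connectives
(boxed formulas and atoms are treated as arbitrary). -/
def Respects (v : MF → Bool) : Prop :=
  v bot = false ∧
  (∀ A B, v (and A B) = (v A && v B)) ∧
  (∀ A B, v (or A B) = (v A || v B)) ∧
  (∀ A B, v (imp A B) = (!(v A) || v B)) ∧
  (∀ A, v (neg A) = !(v A))

/-- Classical propositional tautology (in the modal language). -/
def IsTaut (A : MF) : Prop := ∀ v, Respects v → v A = true

end MF

/-- Hilbert-style provability in the normal modal logic `K` extended by the
axiom scheme `Ax`: classical tautologies, scheme K, the extra axioms,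
modus ponens and necessitation. -/
inductive Prv (Ax : MF → Prop) : MF → Prop
  | taut {A : MF} : MF.IsTaut A → Prv Ax A
  | axK {A B : MF} : Prv Ax ((MF.box (A.imp B)).imp ((MF.box A).imp (MF.box B)))
  | extra {A : MF} : Ax A → Prv Ax A
  | mp {A B : MF} : Prv Ax (A.imp B) → Prv Ax A → Prv Ax B
  | nec {A : MF} : Prv Ax A → Prv Ax A.box

/-- Scheme 4 : □A → □□A. -/
def Ax4 (A : MF) : Prop := ∃ B, A = (MF.box B).imp (MF.box (MF.box B))
/-- Scheme T : □A → A. -/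
def AxT (A : MF) : Prop := ∃ B, A = (MF.box B).imp B
/-- Scheme D : ¬□⊥. -/
def AxD (A : MF) : Prop := A = MF.neg (MF.box MF.bot)
/-- Löb's scheme L : □(□A→A) → □A. -/
def AxGL (A : MF) : Prop := ∃ B, A = (MF.box ((MF.box B).imp B)).imp (MF.box B)

def AxK4  : MF → Prop := Ax4
def AxKD4 : MF → Prop := fun A => Ax4 A ∨ AxD A
def AxS4  : MF → Prop := fun A => Ax4 A ∨ AxT A

def PrvK   : MF → Prop := Prv (fun _ => False)
def PrvK4  : MF → Prop := Prv AxK4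
def PrvKD4 : MF → Prop := Prv AxKD4
def PrvS4  : MF → Prop := Prv AxS4
def PrvGL  : MF → Prop := Prv AxGL

/-- Conjunction of a finite list of modal formulas (empty conjunction is ⊤ := ⊥→⊥). -/
def conjL (l : List MF) : MF := l.foldr MF.and (MF.imp MF.bot MF.bot)

/-- `ModalConseq Ax Γ A` : there are B₁,…,Bₙ ∈ Γ with ⊢ (B₁∧…∧Bₙ)→A in K + Ax. -/
def ModalConseq (Ax : MF → Prop) (Γ : Set MF) (A : MF) : Prop :=
  ∃ l : List MF, (∀ B ∈ l, B ∈ Γ) ∧ Prv Ax ((conjL l).imp A)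

/-! ### Annotated modal formulas and translations -/

/-- Modal formulas with every occurrence of □ annotated by a natural number. -/
inductive AMF : Type
  | atom : ℕ → AMF
  | bot  : AMF
  | and  : AMF → AMF → AMF
  | or   : AMF → AMF → AMF
  | imp  : AMF → AMF → AMF
  | neg  : AMF → AMF
  | box  : ℕ → AMF → AMF

namespace AMF

/-- Forget the annotations. -/
def erase : AMF → MF
  | atom n => .atom n
  | bot => .bot
  | and A B => .and (erase A) (erase B)
  | or A B => .or (erase A) (erase B)
  | imp A B => .imp (erase A) (erase B)
  | neg A => .neg (erase A)
  | box _ A => .box (erase A)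

/-- The list of all annotations occurring in an annotated formula. -/
def labels : AMF → List ℕ
  | atom _ => []
  | bot => []
  | and A B => labels A ++ labels B
  | or A B => labels A ++ labels B
  | imp A B => labels A ++ labels B
  | neg A => labels A
  | box n A => n :: labels A

/-- A translation is ordered when the number assigned to each box is strictly
greater than all numbers assigned to boxes in its scope. -/
def Ordered : AMF → Prop
  | atom _ => True
  | bot => True
  | and A B => Ordered A ∧ Ordered B
  | or A B => Ordered A ∧ Ordered B
  | imp A B => Ordered A ∧ Ordered B
  | neg A => Ordered A
  | box n A => Ordered A ∧ ∀ m ∈ labels A, m < n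

end AMF

/-- `conjQ q n` is the conjunction q₀ ∧ … ∧ q_n of the atoms `q i`. -/
def conjQ (q : ℕ → ℕ) : ℕ → MF
  | 0 => .atom (q 0)
  | n+1 => (conjQ q n).and (.atom (q (n+1)))

/-- The formula `A^t`: commutes with connectives and `(□B)^t = □(q₀∧…∧q_n → B^t)`
where `n` is the annotation on that box. -/
def AMF.trans (q : ℕ → ℕ) : AMF → MF
  | .atom n => .atom n
  | .bot => .bot
  | .and A B => (trans q A).and (trans q B)
  | .or A B => (trans q A).or (trans q B)
  | .imp A B => (trans q A).imp (trans q B)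
  | .neg A => (trans q A).neg
  | .box n A => .box ((conjQ q n).imp (trans q A))

/-! ### Kripke semantics -/

/-- Classical Kripke forcing for modal formulas. -/
def Forces {W : Type} (R : W → W → Prop) (V : ℕ → W → Prop) : W → MF → Prop
  | w, .atom n => V n w
  | _, .bot => False
  | w, .and A B => Forces R V w A ∧ Forces R V w B
  | w, .or A B => Forces R V w A ∨ Forces R V w B
  | w, .imp A B => Forces R V w A → Forces R V w B
  | w, .neg A => ¬ Forces R V w A
  | w, .box A => ∀ u, R w u → Forces R V u A

/-- Cluster equivalence: `x = y`, or `x R y` and `y R x`. -/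
def ClusterEq {W : Type} (R : W → W → Prop) (x y : W) : Prop :=
  x = y ∨ (R x y ∧ R y x)

/-- A transitive frame whose clusters form a tree and in which every cluster is
a single irreflexive point or a nonempty set of reflexive points. -/
structure TreeWithClusters {W : Type} (R : W → W → Prop) : Prop where
  trans : Transitive R
  rooted : ∃ r, ∀ x, ClusterEq R r x ∨ R r x
  treelike : ∀ x y z, R x z → R y z → (ClusterEq R x y ∨ R x y ∨ R y x)
  cluster_irrefl_singleton : ∀ x, ¬ R x x → ∀ y, ClusterEq R x y → y = x
  cluster_homog : ∀ x y, ClusterEq R x y → (R x x → R y y)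

/-! ### Expansions -/

/-- `Expansion A B` : `B ∈ E(A)`, the set of expansions of `A`. -/
inductive Expansion : MF → MF → Prop
  | atom (n) : Expansion (.atom n) (.atom n)
  | bot : Expansion .bot .bot
  | and {A B D E : MF} : Expansion A D → Expansion B E → Expansion (A.and B) (D.and E)
  | or {A B D E : MF} : Expansion A D → Expansion B E → Expansion (A.or B) (D.or E)
  | imp {A B D E : MF} : Expansion A D → Expansion B E → Expansion (A.imp B) (D.imp E)
  | neg {A D : MF} : Expansion A D → Expansion A.neg D.neg
  | box {A D : MF} (l : List MF) : Expansion A D → (∀ E ∈ l, Expansion A E) →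
      Expansion A.box (MF.box (l.foldr MF.or D))

/-! ### Propositional formulas and Visser-style natural deduction -/

inductive PF : Type
  | atom : ℕ → PF
  | bot  : PF
  | and  : PF → PF → PF
  | or   : PF → PF → PF
  | imp  : PF → PF → PF
  deriving DecidableEq

def PF.top : PF := .imp .bot .bot
def PF.neg (A : PF) : PF := A.imp .bot

/-- Natural deduction derivability from a set of assumptions.  `ef` switches
the ex falso rule on/off; `Rule` is an additional rule given as a relation
between a list of premises and a conclusion.  The base system (with `ef`
and no extra rule) is Visser's BPC: ∧/∨ intro and elim, →I (discharging),
ex falso, and the formalized rules; no modus ponens. -/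
inductive Deriv (ef : Prop) (Rule : List PF → PF → Prop) : Set PF → PF → Prop
  | hyp {Γ : Set PF} {A : PF} : A ∈ Γ → Deriv ef Rule Γ A
  | andI {Γ : Set PF} {A B : PF} : Deriv ef Rule Γ A → Deriv ef Rule Γ B → Deriv ef Rule Γ (A.and B)
  | andE1 {Γ : Set PF} {A B : PF} : Deriv ef Rule Γ (A.and B) → Deriv ef Rule Γ A
  | andE2 {Γ : Set PF} {A B : PF} : Deriv ef Rule Γ (A.and B) → Deriv ef Rule Γ B
  | orI1 {Γ : Set PF} {A B : PF} : Deriv ef Rule Γ A → Deriv ef Rule Γ (A.or B)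
  | orI2 {Γ : Set PF} {A B : PF} : Deriv ef Rule Γ B → Deriv ef Rule Γ (A.or B)
  | orE {Γ : Set PF} {A B C : PF} : Deriv ef Rule Γ (A.or B) → Deriv ef Rule (insert A Γ) C →
      Deriv ef Rule (insert B Γ) C → Deriv ef Rule Γ C
  | impI {Γ : Set PF} {A B : PF} : Deriv ef Rule (insert A Γ) B → Deriv ef Rule Γ (A.imp B)
  | exfalso {Γ : Set PF} {A : PF} : ef → Deriv ef Rule Γ .bot → Deriv ef Rule Γ A
  | fAndI {Γ : Set PF} {A B C : PF} : Deriv ef Rule Γ (A.imp B) → Deriv ef Rule Γ (A.imp C) →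
      Deriv ef Rule Γ (A.imp (B.and C))
  | fOrE {Γ : Set PF} {A B C : PF} : Deriv ef Rule Γ (A.imp C) → Deriv ef Rule Γ (B.imp C) →
      Deriv ef Rule Γ ((A.or B).imp C)
  | fTr {Γ : Set PF} {A B C : PF} : Deriv ef Rule Γ (A.imp B) → Deriv ef Rule Γ (B.imp C) →
      Deriv ef Rule Γ (A.imp C)
  | extra {Γ : Set PF} {ps : List PF} {c : PF} : Rule ps c → (∀ p ∈ ps, Deriv ef Rule Γ p) → Deriv ef Rule Γ c

/-- No extra rule. -/
def RuleNone : List PF → PF → Prop := fun _ _ => False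
/-- Rule C : from A and ¬A infer ⊥. -/
def RuleC : List PF → PF → Prop := fun ps c => ∃ A : PF, ps = [A, A.neg] ∧ c = .bot
/-- Rule R (modus ponens) : from A and A→B infer B. -/
def RuleR : List PF → PF → Prop := fun ps c => ∃ A B : PF, ps = [A, A.imp B] ∧ c = B
/-- Löb's rule L : from (A∧(A→B))→B infer A→B. -/
def RuleL : List PF → PF → Prop :=
  fun ps c => ∃ A B : PF, ps = [(A.and (A.imp B)).imp B] ∧ c = A.imp B
/-- Rule C' : from ⊤→⊥ infer ⊥. -/
def RuleC' : List PF → PF → Prop := fun ps c => ps = [PF.top.imp .bot] ∧ c = .bot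
/-- Rule R' : from ⊤→A infer A. -/
def RuleR' : List PF → PF → Prop := fun ps c => ∃ A : PF, ps = [PF.top.imp A] ∧ c = A
/-- Rule L' : from (⊤→A)→A infer ⊤→A. -/
def RuleL' : List PF → PF → Prop :=
  fun ps c => ∃ A : PF, ps = [(PF.top.imp A).imp A] ∧ c = PF.top.imp A

def BPC  : Set PF → PF → Prop := Deriv True RuleNone
def EBPC : Set PF → PF → Prop := Deriv True RuleC
def IPC  : Set PF → PF → Prop := Deriv True RuleR
def FPL  : Set PF → PF → Prop := Deriv True RuleL
def MPC  : Set PF → PF → Prop := Deriv False RuleR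

/-! ### BHK translations -/

/-- The BHK translation `b`. -/
def bhk : PF → MF
  | .atom n => .box (.atom n)
  | .bot => .box .bot
  | .and A B => (bhk A).and (bhk B)
  | .or A B => (bhk A).or (bhk B)
  | .imp A B => .box ((bhk A).imp (bhk B))

/-- The weak BHK translation `w`.  The propositional atom `n` is embedded as
the modal atom `n+1`, and the fresh atom `q` (not in the propositional
language) is the modal atom `0`; `⊥^w = □q`. -/
def wtr : PF → MF
  | .atom n => .box (.atom (n+1))
  | .bot => .box (.atom 0)
  | .and A B => (wtr A).and (wtr B)
  | .or A B => (wtr A).or (wtr B)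
  | .imp A B => .box ((wtr A).imp (wtr B))

/-! ### The cut-free sequent calculus G(KD4) -/

/-- Cut-free derivability in the sequent calculus G(KD4): axioms,
structural rules (weakening, contraction, exchange), two-sided rules for
∧, ∨, →, ¬, and the modal rules □₄R and □_D R. -/
inductive GKD4 : List MF → List MF → Prop
  | ax (A) : GKD4 [A] [A]
  | axBot : GKD4 [.bot] []
  | exL {Γ Γ' Δ : List MF} : GKD4 Γ Δ → Γ.Perm Γ' → GKD4 Γ' Δ
  | exR {Γ Δ Δ' : List MF} : GKD4 Γ Δ → Δ.Perm Δ' → GKD4 Γ Δ'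
  | wL {Γ Δ : List MF} (A : MF) : GKD4 Γ Δ → GKD4 (A :: Γ) Δ
  | wR {Γ Δ : List MF} (A : MF) : GKD4 Γ Δ → GKD4 Γ (A :: Δ)
  | cL {Γ Δ : List MF} {A : MF} : GKD4 (A :: A :: Γ) Δ → GKD4 (A :: Γ) Δ
  | cR {Γ Δ : List MF} {A : MF} : GKD4 Γ (A :: A :: Δ) → GKD4 Γ (A :: Δ)
  | andL1 {Γ Δ : List MF} {A B : MF} : GKD4 (A :: Γ) Δ → GKD4 (A.and B :: Γ) Δ
  | andL2 {Γ Δ : List MF} {A B : MF} : GKD4 (B :: Γ) Δ → GKD4 (A.and B :: Γ) Δ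
  | andR {Γ₀ Δ₀ Γ₁ Δ₁ : List MF} {A B : MF} : GKD4 Γ₀ (A :: Δ₀) → GKD4 Γ₁ (B :: Δ₁) →
      GKD4 (Γ₀ ++ Γ₁) (A.and B :: (Δ₀ ++ Δ₁))
  | orL {Γ₀ Δ₀ Γ₁ Δ₁ : List MF} {A B : MF} : GKD4 (A :: Γ₀) Δ₀ → GKD4 (B :: Γ₁) Δ₁ →
      GKD4 (A.or B :: (Γ₀ ++ Γ₁)) (Δ₀ ++ Δ₁)
  | orR1 {Γ Δ : List MF} {A B : MF} : GKD4 Γ (A :: Δ) → GKD4 Γ (A.or B :: Δ)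
  | orR2 {Γ Δ : List MF} {A B : MF} : GKD4 Γ (B :: Δ) → GKD4 Γ (A.or B :: Δ)
  | impL {Γ₀ Δ₀ Γ₁ Δ₁ : List MF} {A B : MF} : GKD4 Γ₀ (A :: Δ₀) → GKD4 (B :: Γ₁) Δ₁ →
      GKD4 (A.imp B :: (Γ₀ ++ Γ₁)) (Δ₀ ++ Δ₁)
  | impR {Γ Δ : List MF} {A B : MF} : GKD4 (A :: Γ) (B :: Δ) → GKD4 Γ (A.imp B :: Δ)
  | negL {Γ Δ : List MF} {A : MF} : GKD4 Γ (A :: Δ) → GKD4 (A.neg :: Γ) Δ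
  | negR {Γ Δ : List MF} {A : MF} : GKD4 (A :: Γ) Δ → GKD4 Γ (A.neg :: Δ)
  | box4R {Γ : List MF} {A : MF} : GKD4 (Γ ++ Γ.map MF.box) [A] → GKD4 (Γ.map MF.box) [MF.box A]
  | boxDR {Γ : List MF} : GKD4 (Γ ++ Γ.map MF.box) [] → GKD4 (Γ.map MF.box) []

/-- Disjunction of a finite list of propositional formulas (empty: ⊥). -/
def disjL : List PF → PF
  | [] => .bot
  | [A] => A
  | A :: B :: r => A.or (disjL (B :: r))

/-! ### Kripke semantics for MPC -/

/-- Intuitionistic (minimal) forcing, where `⊥` has its own upward-closed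
valuation `Vbot`. -/
def MForces {W : Type} (le : W → W → Prop) (V : ℕ → W → Prop) (Vbot : W → Prop) :
    W → PF → Prop
  | w, .atom n => V n w
  | w, .bot => Vbot w
  | w, .and A B => MForces le V Vbot w A ∧ MForces le V Vbot w B
  | w, .or A B => MForces le V Vbot w A ∨ MForces le V Vbot w B
  | w, .imp A B => ∀ u, le w u → MForces le V Vbot u A → MForces le V Vbot u B

/-- The S4 valuation induced by an MPC valuation: the fresh atom `q` (modal
atom 0) gets `V(⊥)`, and the propositional atom `n` (modal atom `n+1`) gets `V(n)`. -/
def shiftVal {W : Type} (V : ℕ → W → Prop) (Vbot : W → Prop) : ℕ → W → Prop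
  | 0 => Vbot
  | n+1 => V n

/-!
From left to right, argue by induction on derivations. Each `bhk A` implies its own box in K4, so
anything derived from a set of translations may be boxed; this is what `→`-introduction needs. Only
modus ponens uses scheme T.

From right to left, argue semantically. On a preorder with an upward closed valuation, `A` is forced
intuitionistically exactly where `bhk A` is forced classically. Such models validate S4, and the
canonical model of prime theories, ordered by inclusion, refutes every consequence that IPC does not
derive.
-/

/-! ### Derivability in normal modal logics -/

section Tautologies

variable {v : MF → Bool} {A B C : MF}

namespace MF.Respects

theorem and_iff (hv : Respects v) : v (A.and B) = true ↔ v A = true ∧ v B = true := by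
  simp [hv.2.1 A B]

theorem or_iff (hv : Respects v) : v (A.or B) = true ↔ v A = true ∨ v B = true := by
  simp [hv.2.2.1 A B]

theorem imp_iff (hv : Respects v) : v (A.imp B) = true ↔ (v A = true → v B = true) := by
  simp [hv.2.2.2.1 A B, imp_iff_not_or]

theorem bot_imp (hv : Respects v) : v (bot.imp A) = true := by
  simp [hv.imp_iff, hv.1]

theorem conjL_iff (hv : Respects v) {l : List MF} :
    v (conjL l) = true ↔ ∀ B ∈ l, v B = true := by
  induction l with
  | nil => simpa [conjL] using hv.bot_imp
  | cons B l ih =>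
    rw [List.forall_mem_cons, ← ih]
    exact hv.and_iff

end MF.Respects

namespace MF.IsTaut

theorem bot_imp : IsTaut (bot.imp A) := fun _ hv => hv.bot_imp

theorem imp_self : IsTaut (A.imp A) := fun _ hv => hv.imp_iff.2 id

theorem and_left : IsTaut ((A.and B).imp A) := fun _ hv => by
  simp only [hv.imp_iff, hv.and_iff]; tauto

theorem and_right : IsTaut ((A.and B).imp B) := fun _ hv => by
  simp only [hv.imp_iff, hv.and_iff]; tauto

theorem and_intro : IsTaut (A.imp (B.imp (A.and B))) := fun _ hv => by
  simp only [hv.imp_iff, hv.and_iff]; tauto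

theorem or_inl : IsTaut (A.imp (A.or B)) := fun _ hv => by
  simp only [hv.imp_iff, hv.or_iff]; tauto

theorem or_inr : IsTaut (B.imp (A.or B)) := fun _ hv => by
  simp only [hv.imp_iff, hv.or_iff]; tauto

theorem const : IsTaut (A.imp (B.imp A)) := fun _ hv => by
  simp only [hv.imp_iff]; tauto

theorem uncurry : IsTaut ((A.imp (B.imp C)).imp ((A.and B).imp C)) := fun _ hv => by
  simp only [hv.imp_iff, hv.and_iff]; tauto

theorem imp_trans : IsTaut ((A.imp B).imp ((B.imp C).imp (A.imp C))) := fun _ hv => by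
  simp only [hv.imp_iff]; tauto

theorem imp_and : IsTaut ((A.imp B).imp ((A.imp C).imp (A.imp (B.and C)))) := fun _ hv => by
  simp only [hv.imp_iff, hv.and_iff]; tauto

theorem or_imp : IsTaut ((A.imp C).imp ((B.imp C).imp ((A.or B).imp C))) := fun _ hv => by
  simp only [hv.imp_iff, hv.or_iff]; tauto

end MF.IsTaut

end Tautologies

section Modal

variable {Ax : MF → Prop} {Γ : Set MF} {A B C : MF}

theorem Prv.imp_trans (hAB : Prv Ax (A.imp B)) (hBC : Prv Ax (B.imp C)) : Prv Ax (A.imp C) :=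
  .mp (.mp (.taut .imp_trans) hAB) hBC

theorem Prv.imp_and (hAB : Prv Ax (A.imp B)) (hAC : Prv Ax (A.imp C)) :
    Prv Ax (A.imp (B.and C)) :=
  .mp (.mp (.taut .imp_and) hAB) hAC

theorem Prv.or_imp (hAC : Prv Ax (A.imp C)) (hBC : Prv Ax (B.imp C)) :
    Prv Ax ((A.or B).imp C) :=
  .mp (.mp (.taut .or_imp) hAC) hBC

theorem Prv.box_mono (h : Prv Ax (A.imp B)) : Prv Ax (A.box.imp B.box) :=
  .mp .axK (.nec h)

theorem Prv.box_and (A B : MF) : Prv Ax ((A.box.and B.box).imp (A.and B).box) := by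
  have curried : Prv Ax (A.box.imp (B.box.imp (A.and B).box)) :=
    .imp_trans (.box_mono (.taut .and_intro)) .axK
  exact .mp (.taut .uncurry) curried

namespace ModalConseq

theorem of_mem (hA : A ∈ Γ) : ModalConseq Ax Γ A :=
  ⟨[A], by simpa using hA, .taut .and_left⟩

theorem of_prv (hA : Prv Ax A) : ModalConseq Ax Γ A :=
  ⟨[], by simp, .mp (.taut .const) hA⟩

theorem mp (hAB : ModalConseq Ax Γ (A.imp B)) (hA : ModalConseq Ax Γ A) :
    ModalConseq Ax Γ B := by
  obtain ⟨l, hl, hlAB⟩ := hAB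
  obtain ⟨m, hm, hmA⟩ := hA
  refine ⟨l ++ m, by grind, .mp (.mp (.taut ?_) hlAB) hmA⟩
  intro v hv
  simp only [hv.imp_iff, hv.conjL_iff, List.mem_append]
  exact fun hAB hA hlm => hAB (fun C hC => hlm C (.inl hC)) (hA fun C hC => hlm C (.inr hC))

theorem of_isTaut_imp (h : MF.IsTaut (A.imp B)) (hA : ModalConseq Ax Γ A) : ModalConseq Ax Γ B :=
  (of_prv (.taut h)).mp hA

theorem of_isTaut_imp_imp (h : MF.IsTaut (A.imp (B.imp C))) (hA : ModalConseq Ax Γ A)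
    (hB : ModalConseq Ax Γ B) : ModalConseq Ax Γ C :=
  (of_isTaut_imp h hA).mp hB

theorem imp_intro (h : ModalConseq Ax (insert A Γ) B) : ModalConseq Ax Γ (A.imp B) := by
  obtain ⟨l, hl, hlB⟩ := h
  refine ⟨l.filter (· ≠ A), by grind, .mp (.taut ?_) hlB⟩
  intro v hv
  simp only [hv.imp_iff, hv.conjL_iff]
  grind

theorem or_elim (h : ModalConseq Ax Γ (A.or B)) (hA : ModalConseq Ax (insert A Γ) C)
    (hB : ModalConseq Ax (insert B Γ) C) : ModalConseq Ax Γ C :=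
  (of_isTaut_imp_imp .or_imp hA.imp_intro hB.imp_intro).mp h

theorem box_of_isTaut_imp_imp (h : MF.IsTaut (A.imp (B.imp C))) (hA : ModalConseq Ax Γ A.box)
    (hB : ModalConseq Ax Γ B.box) : ModalConseq Ax Γ C.box :=
  ((of_prv (.imp_trans (.box_mono (.taut h)) .axK)).mp hA).mp hB

end ModalConseq

/-- `A` is persistent if it provably implies its own necessitation. Assumptions of this kind may
be kept when boxing a conclusion. -/
def MF.Persistent (Ax : MF → Prop) (A : MF) : Prop := Prv Ax (A.imp A.box)

namespace MF.Persistent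

theorem box (h4 : Ax4 ≤ Ax) (A : MF) : A.box.Persistent Ax :=
  .extra (h4 _ ⟨A, rfl⟩)

theorem and (hA : A.Persistent Ax) (hB : B.Persistent Ax) : (A.and B).Persistent Ax := by
  have to_boxes : Prv Ax ((A.and B).imp (A.box.and B.box)) :=
    .imp_and (.imp_trans (.taut .and_left) hA)
      (.imp_trans (.taut .and_right) hB)
  exact to_boxes.imp_trans (.box_and A B)

theorem or (hA : A.Persistent Ax) (hB : B.Persistent Ax) : (A.or B).Persistent Ax :=
  .or_imp (hA.imp_trans (.box_mono (.taut .or_inl)))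
    (hB.imp_trans (.box_mono (.taut .or_inr)))

theorem of_prv (hA : Prv Ax A) : A.Persistent Ax :=
  .mp (.taut .const) hA.nec

theorem conjL {l : List MF} (hl : ∀ B ∈ l, B.Persistent Ax) : (conjL l).Persistent Ax := by
  induction l with
  | nil => exact of_prv (.taut .bot_imp)
  | cons B l ih => exact (hl B (by simp)).and (ih fun C hC => hl C (by simp [hC]))

end MF.Persistent

theorem ModalConseq.box_intro (hΓ : ∀ B ∈ Γ, B.Persistent Ax) (hA : ModalConseq Ax Γ A) :
    ModalConseq Ax Γ A.box := by
  obtain ⟨l, hl, hlA⟩ := hA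
  have persistent_conj : (conjL l).Persistent Ax := .conjL fun B hB => hΓ B (hl B hB)
  exact ⟨l, hl, persistent_conj.imp_trans hlA.box_mono⟩

end Modal

/-! ### Soundness of the translation -/

theorem bhk_persistent {Ax : MF → Prop} (h4 : Ax4 ≤ Ax) (A : PF) : (bhk A).Persistent Ax := by
  induction A with
  | atom n => exact .box h4 _
  | bot => exact .box h4 _
  | and A B hA hB => exact hA.and hB
  | or A B hA hB => exact hA.or hB
  | imp A B => exact .box h4 _

theorem Prv.box_bot_imp_bhk {Ax : MF → Prop} (A : PF) : Prv Ax (MF.bot.box.imp (bhk A)) := by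
  induction A with
  | atom n => exact .box_mono (.taut .bot_imp)
  | bot => exact .taut .imp_self
  | and A B hA hB => exact hA.imp_and hB
  | or A B hA => exact hA.imp_trans (.taut .or_inl)
  | imp A B => exact .box_mono (.taut .bot_imp)

theorem Deriv.modalConseq_bhk {ef : Prop} {Rule : List PF → PF → Prop} {Ax : MF → Prop}
    (h4 : Ax4 ≤ Ax)
    (hRule : ∀ {Γ ps c}, Rule ps c → (∀ p ∈ ps, ModalConseq Ax (bhk '' Γ) (bhk p)) →
      ModalConseq Ax (bhk '' Γ) (bhk c))
    {Γ : Set PF} {A : PF} (h : Deriv ef Rule Γ A) : ModalConseq Ax (bhk '' Γ) (bhk A) := by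
  induction h with
  | hyp hA => exact .of_mem ⟨_, hA, rfl⟩
  | andI _ _ hA hB => exact .of_isTaut_imp_imp .and_intro hA hB
  | andE1 _ h => exact .of_isTaut_imp .and_left h
  | andE2 _ h => exact .of_isTaut_imp .and_right h
  | orI1 _ h => exact .of_isTaut_imp .or_inl h
  | orI2 _ h => exact .of_isTaut_imp .or_inr h
  | orE _ _ _ h hA hB =>
    rw [Set.image_insert_eq] at hA hB
    exact h.or_elim hA hB
  | impI _ h =>
    rw [Set.image_insert_eq] at h
    exact h.imp_intro.box_intro (Set.forall_mem_image.2 fun B _ => bhk_persistent h4 B)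
  | exfalso _ _ h => exact (ModalConseq.of_prv (.box_bot_imp_bhk _)).mp h
  | fAndI _ _ hB hC =>
    exact .box_of_isTaut_imp_imp .imp_and hB hC
  | fOrE _ _ hA hB =>
    exact .box_of_isTaut_imp_imp .or_imp hA hB
  | fTr _ _ hAB hBC =>
    exact .box_of_isTaut_imp_imp .imp_trans hAB hBC
  | extra hr _ hps => exact hRule hr hps

theorem IPC.modalConseq_bhk {Γ : Set PF} {A : PF} (h : IPC Γ A) :
    ModalConseq AxS4 (bhk '' Γ) (bhk A) := by
  have h4 : Ax4 ≤ AxS4 := fun _ => Or.inl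
  refine Deriv.modalConseq_bhk h4 ?_ h
  rintro Δ _ C ⟨B, _, rfl, rfl⟩ hps
  have hB : ModalConseq AxS4 (bhk '' Δ) (bhk B) := hps B (by simp)
  have hBC : ModalConseq AxS4 (bhk '' Δ) ((bhk B).imp (bhk C)).box := hps (B.imp C) (by simp)
  exact ((ModalConseq.of_prv (.extra (Or.inr ⟨_, rfl⟩))).mp hBC).mp hB

/-! ### Kripke semantics of the translation -/

section Kripke

variable {W : Type} {R : W → W → Prop} {V : ℕ → W → Prop}

open Classical in
theorem MF.respects_decide_forces (w : W) :
    MF.Respects fun A => decide (Forces R V w A) := by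
  refine ⟨decide_eq_false id, fun A B => ?_, fun A B => ?_, fun A B => ?_, fun A => ?_⟩ <;>
    rw [Bool.eq_iff_iff] <;>
    simp only [decide_eq_true_eq, Bool.and_eq_true, Bool.or_eq_true, Bool.not_eq_true',
      decide_eq_false_iff_not]
  exacts [Iff.rfl, Iff.rfl, imp_iff_not_or, Iff.rfl]

theorem Prv.forces {Ax : MF → Prop} (hAx : ∀ A, Ax A → ∀ w, Forces R V w A) {A : MF}
    (h : Prv Ax A) (w : W) : Forces R V w A := by
  induction h generalizing w with
  | taut hA => simpa using hA _ (MF.respects_decide_forces w)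
  | axK => exact fun hAB hA u hu => hAB u hu (hA u hu)
  | extra hA => exact hAx _ hA w
  | mp _ _ hAB hA => exact hAB w (hA w)
  | nec _ hA => exact fun u _ => hA u

theorem forces_conjL {w : W} {l : List MF} (hl : ∀ B ∈ l, Forces R V w B) :
    Forces R V w (conjL l) := by
  induction l with
  | nil => exact id
  | cons B l ih => exact ⟨hl B (by simp), ih fun C hC => hl C (by simp [hC])⟩

theorem ModalConseq.forces {Ax : MF → Prop} (hAx : ∀ A, Ax A → ∀ w, Forces R V w A)
    {Γ : Set MF} {A : MF} (h : ModalConseq Ax Γ A) {w : W} (hΓ : ∀ B ∈ Γ, Forces R V w B) :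
    Forces R V w A := by
  obtain ⟨l, hl, hlA⟩ := h
  exact hlA.forces hAx w (forces_conjL fun B hB => hΓ B (hl B hB))

theorem AxS4.forces [Preorder W] {A : MF} (hA : AxS4 A) (w : W) : Forces (· ≤ ·) V w A := by
  rcases hA with ⟨B, rfl⟩ | ⟨B, rfl⟩
  · exact fun hB u hwu x hux => hB x (hwu.trans hux)
  · exact fun hB => hB w le_rfl

theorem forces_bhk_iff [Preorder W] (hV : ∀ n, Monotone (V n)) {w : W} {A : PF} :
    Forces (· ≤ ·) V w (bhk A) ↔ MForces (· ≤ ·) V (fun _ => False) w A := by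
  induction A generalizing w with
  | atom n => exact ⟨fun h => h w le_rfl, fun h u hwu => hV n hwu h⟩
  | bot => exact ⟨fun h => h w le_rfl, False.elim⟩
  | and A B hA hB => exact and_congr hA hB
  | or A B hA hB => exact or_congr hA hB
  | imp A B hA hB => exact forall₂_congr fun u _ => imp_congr hA hB

end Kripke

/-- Intuitionistic Kripke consequence: in every preordered model with upward closed valuation, the
worlds forcing `Γ` force `A`. Here `⊥` is forced nowhere. -/
def KripkeConseq (Γ : Set PF) (A : PF) : Prop :=
  ∀ (W : Type) [Preorder W] (V : ℕ → W → Prop), (∀ n, Monotone (V n)) → ∀ w : W,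
    (∀ B ∈ Γ, MForces (· ≤ ·) V (fun _ => False) w B) →
      MForces (· ≤ ·) V (fun _ => False) w A

theorem ModalConseq.kripkeConseq {Γ : Set PF} {A : PF}
    (h : ModalConseq AxS4 (bhk '' Γ) (bhk A)) : KripkeConseq Γ A := by
  intro W _ V hV w hΓ
  have forces_image : ∀ X ∈ bhk '' Γ, Forces (· ≤ ·) V w X :=
    Set.forall_mem_image.2 fun B hB => (forces_bhk_iff hV).2 (hΓ B hB)
  exact (forces_bhk_iff hV).1 (h.forces (fun _ => AxS4.forces) forces_image)

/-! ### Prime theories and completeness -/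

section Canonical

variable {ef : Prop} {Rule : List PF → PF → Prop} {Γ Δ M : Set PF} {A B : PF}

theorem Deriv.mono (hΓΔ : Γ ⊆ Δ) (h : Deriv ef Rule Γ A) : Deriv ef Rule Δ A := by
  induction h generalizing Δ with
  | hyp hA => exact .hyp (hΓΔ hA)
  | andI _ _ hA hB => exact .andI (hA hΓΔ) (hB hΓΔ)
  | andE1 _ h => exact .andE1 (h hΓΔ)
  | andE2 _ h => exact .andE2 (h hΓΔ)
  | orI1 _ h => exact .orI1 (h hΓΔ)
  | orI2 _ h => exact .orI2 (h hΓΔ)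
  | orE _ _ _ h hA hB =>
    exact .orE (h hΓΔ) (hA (Set.insert_subset_insert hΓΔ)) (hB (Set.insert_subset_insert hΓΔ))
  | impI _ h => exact .impI (h (Set.insert_subset_insert hΓΔ))
  | exfalso hef _ h => exact .exfalso hef (h hΓΔ)
  | fAndI _ _ hB hC => exact .fAndI (hB hΓΔ) (hC hΓΔ)
  | fOrE _ _ hA hB => exact .fOrE (hA hΓΔ) (hB hΓΔ)
  | fTr _ _ hAB hBC => exact .fTr (hAB hΓΔ) (hBC hΓΔ)
  | extra hr _ hps => exact .extra hr fun p hp => hps p hp hΓΔ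

-- The detour through `A ∨ A` gives cut without modus ponens.
theorem Deriv.cut (hA : Deriv ef Rule Γ A) (hB : Deriv ef Rule (insert A Γ) B) :
    Deriv ef Rule Γ B :=
  .orE (.orI1 hA) hB hB

theorem Deriv.modusPonens (hR : RuleR ≤ Rule) (hAB : Deriv ef Rule Γ (A.imp B))
    (hA : Deriv ef Rule Γ A) : Deriv ef Rule Γ B :=
  .extra (hR _ _ ⟨A, B, rfl, rfl⟩) (by simp [hA, hAB])

-- Phrasing compactness with a filter lets the premises of a rule share their finite assumptions.
theorem Deriv.eventually_inter (h : Deriv ef Rule Γ A) :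
    ∀ᶠ s : Finset PF in Filter.atTop, Deriv ef Rule (↑s ∩ Γ) A := by
  have inter_insert_subset (s : Finset PF) (B : PF) (Δ : Set PF) :
      (↑s ∩ insert B Δ : Set PF) ⊆ insert B (↑s ∩ Δ) := by grind
  induction h with
  | @hyp Γ A hA =>
    filter_upwards [Filter.eventually_ge_atTop {A}] with s hs
    exact .hyp ⟨by simpa using hs, hA⟩
  | andI _ _ hA hB => filter_upwards [hA, hB] with s using .andI
  | andE1 _ h => exact h.mono fun s => .andE1
  | andE2 _ h => exact h.mono fun s => .andE2
  | orI1 _ h => exact h.mono fun s => .orI1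
  | orI2 _ h => exact h.mono fun s => .orI2
  | orE _ _ _ h hA hB =>
    filter_upwards [h, hA, hB] with s h hA hB
    exact .orE h (hA.mono (inter_insert_subset s _ _)) (hB.mono (inter_insert_subset s _ _))
  | impI _ h => exact h.mono fun s h => .impI (h.mono (inter_insert_subset s _ _))
  | exfalso hef _ h => exact h.mono fun s => .exfalso hef
  | fAndI _ _ hB hC => filter_upwards [hB, hC] with s using .fAndI
  | fOrE _ _ hA hB => filter_upwards [hA, hB] with s using .fOrE
  | fTr _ _ hAB hBC => filter_upwards [hAB, hBC] with s using .fTr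
  | @extra Γ ps c hr _ hps =>
    exact (ps.finite_toSet.eventually_all.2 hps).mono fun s => .extra hr

theorem Deriv.exists_mem_of_sUnion {c : Set (Set PF)} (hc : IsChain (· ⊆ ·) c)
    (hne : c.Nonempty) (h : Deriv ef Rule (⋃₀ c) A) : ∃ Γ ∈ c, Deriv ef Rule Γ A := by
  obtain ⟨s, hs⟩ := h.eventually_inter.exists
  obtain ⟨Γ, hΓ, hsΓ⟩ := DirectedOn.exists_mem_subset_of_finite_of_subset_sUnion hne
    hc.directedOn (s.finite_toSet.inter_of_left _) Set.inter_subset_right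
  exact ⟨Γ, hΓ, hs.mono hsΓ⟩

/-- A proper set of formulas that is closed under derivability and has the disjunction property.
With ex falso, being proper amounts to not containing `⊥`; without it, `⊥` may belong. -/
structure PrimeTheory (ef : Prop) (Rule : List PF → PF → Prop) (M : Set PF) : Prop where
  ne_univ : M ≠ Set.univ
  mem_of_deriv {A : PF} : Deriv ef Rule M A → A ∈ M
  mem_or_mem {A B : PF} : A.or B ∈ M → A ∈ M ∨ B ∈ M

theorem PrimeTheory.bot_notMem (hef : ef) (hM : PrimeTheory ef Rule M) : PF.bot ∉ M :=
  fun hbot => hM.ne_univ (Set.eq_univ_of_forall fun _ => hM.mem_of_deriv (.exfalso hef (.hyp hbot)))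

theorem PrimeTheory.of_maximal (hM : Maximal (fun Δ => ¬ Deriv ef Rule Δ A) M) :
    PrimeTheory ef Rule M := by
  have deriv_insert {B : PF} (hB : B ∉ M) : Deriv ef Rule (insert B M) A := by
    by_contra hA
    exact hB (hM.le_of_ge hA (Set.subset_insert B M) (Set.mem_insert B M))
  refine ⟨fun huniv => hM.prop (.hyp (huniv ▸ Set.mem_univ A)), fun {B} hB => ?_,
    fun {B C} hBC => ?_⟩
  · by_contra hBM
    exact hM.prop (hB.cut (deriv_insert hBM))
  · by_contra! hBCM
    exact hM.prop (.orE (.hyp hBC) (deriv_insert hBCM.1) (deriv_insert hBCM.2))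

theorem exists_primeTheory (h : ¬ Deriv ef Rule Γ A) :
    ∃ M, PrimeTheory ef Rule M ∧ Γ ⊆ M ∧ A ∉ M := by
  obtain ⟨M, hΓM, hM⟩ := zorn_subset_nonempty {Δ | ¬ Deriv ef Rule Δ A} (fun c hcA hc hne => by
    refine ⟨⋃₀ c, fun hA => ?_, fun _ => Set.subset_sUnion_of_mem⟩
    obtain ⟨Δ, hΔ, hΔA⟩ := hA.exists_mem_of_sUnion hc hne
    exact hcA hΔ hΔA) Γ h
  exact ⟨M, .of_maximal hM, hΓM, fun hA => hM.prop (.hyp hA)⟩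

/-- The worlds of the canonical model: prime theories, preordered by inclusion. -/
abbrev CanonicalWorld (ef : Prop) (Rule : List PF → PF → Prop) : Type :=
  {M : Set PF // PrimeTheory ef Rule M}

/-- Forcing in the canonical model, where `⊥` and the atoms hold in the theories containing them. -/
abbrev CanonicalForces (M : CanonicalWorld ef Rule) (A : PF) : Prop :=
  MForces (· ≤ ·) (fun n N => .atom n ∈ N.1) (fun N => .bot ∈ N.1) M A

theorem canonicalForces_iff_mem (hR : RuleR ≤ Rule) {M : CanonicalWorld ef Rule} {A : PF} :
    CanonicalForces M A ↔ A ∈ M.1 := by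
  induction A generalizing M with
  | atom n => exact Iff.rfl
  | bot => exact Iff.rfl
  | and A B hA hB =>
    refine (and_congr hA hB).trans ⟨fun h => M.2.mem_of_deriv (.andI (.hyp h.1) (.hyp h.2)), ?_⟩
    exact fun h => ⟨M.2.mem_of_deriv (.andE1 (.hyp h)), M.2.mem_of_deriv (.andE2 (.hyp h))⟩
  | or A B hA hB =>
    refine (or_congr hA hB).trans ⟨?_, M.2.mem_or_mem⟩
    rintro (h | h)
    · exact M.2.mem_of_deriv (.orI1 (.hyp h))
    · exact M.2.mem_of_deriv (.orI2 (.hyp h))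
  | imp A B hA hB =>
    refine (forall₂_congr fun N _ => imp_congr hA hB).trans ⟨fun h => ?_, fun h N hMN hAN => ?_⟩
    · by_contra hAB
      have not_deriv : ¬ Deriv ef Rule (insert A M.1) B :=
        fun hB => hAB (M.2.mem_of_deriv (.impI hB))
      obtain ⟨N, hN, hMN, hBN⟩ := exists_primeTheory not_deriv
      rw [Set.insert_subset_iff] at hMN
      exact hBN (h ⟨N, hN⟩ hMN.2 hMN.1)
    · exact N.2.mem_of_deriv (.modusPonens hR (.hyp (hMN h)) (.hyp hAN))

theorem exists_canonicalWorld_not_forces (hR : RuleR ≤ Rule) (h : ¬ Deriv ef Rule Γ A) :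
    ∃ M : CanonicalWorld ef Rule, (∀ B ∈ Γ, CanonicalForces M B) ∧ ¬ CanonicalForces M A := by
  obtain ⟨M, hM, hΓM, hAM⟩ := exists_primeTheory h
  exact ⟨⟨M, hM⟩, fun B hB => (canonicalForces_iff_mem hR).2 (hΓM hB),
    fun hA => hAM ((canonicalForces_iff_mem hR).1 hA)⟩

theorem KripkeConseq.ipc (h : KripkeConseq Γ A) : IPC Γ A := by
  by_contra hA
  obtain ⟨M, hΓM, hAM⟩ := exists_canonicalWorld_not_forces le_rfl hA
  have bot_nowhere : (fun N : CanonicalWorld True RuleR => PF.bot ∈ N.1) = fun _ => False :=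
    funext fun N => eq_false (N.2.bot_notMem trivial)
  simp only [CanonicalForces, bot_nowhere] at hΓM hAM
  have atoms_monotone (n : ℕ) : Monotone fun N : CanonicalWorld True RuleR => .atom n ∈ N.1 :=
    fun _ _ hMN => Set.mem_of_subset_of_mem hMN
  exact hAM (h _ _ atoms_monotone M hΓM)

end Canonical

-- STATEMENT 5
theorem stmt5 (Γ : Set PF) (A : PF) :
    IPC Γ A ↔ ModalConseq AxS4 (bhk '' Γ) (bhk A) :=
  ⟨IPC.modalConseq_bhk, fun h => h.kripkeConseq.ipc⟩
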